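/- Let n ≥ 1 and d ≥ 1, and let X = (S^d)^{×n} be the product of n copies of the sphere S^d with the product topology. Then cat(X) = n. -/

import Mathlib

open scoped ENNReal

/-- The Lyusternik–Schnirelmann category of a space `X`: the least `n` (or `∞`) such that `X`
admits a cover by `n + 1` open sets whose inclusions into `X` are null-homotopic. -/
noncomputable def LScat (X : Type*) [TopologicalSpace X] : ℕ∞ :=
  sInf {n : ℕ∞ | ∃ m : ℕ, n = (m : ℕ∞) ∧
    ∃ U : Fin (m + 1) → Set X, (∀ i, IsOpen (U i)) ∧ (⋃ i, U i) = Set.univ ∧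
      ∀ i, ∃ x : X,
        ContinuousMap.Homotopic
          (⟨Subtype.val, continuous_subtype_val⟩ : C(U i, X))
          (ContinuousMap.const (U i) x)}

/-- The unit sphere `S^d ⊆ ℝ^{d+1}` with its subspace topology. -/
noncomputable def unitSphere (d : ℕ) : Type :=
  Metric.sphere (0 : EuclideanSpace ℝ (Fin (d + 1))) 1

noncomputable instance (d : ℕ) : TopologicalSpace (unitSphere d) :=
  instTopologicalSpaceSubtype

open scoped NNReal
open Set Metric MeasureTheory Module

/-- The value at `1` of a polynomial of degree at most `N` is a fixed affine combination of its
values at points arbitrarily close to `0`. -/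
lemma exists_affine_comb_eval_one (N : ℕ) {δ : ℝ} (hδ : 0 < δ) :
    ∃ v w : ℕ → ℝ, (∀ k, 0 ≤ v k ∧ v k < δ) ∧ ∀ p : Polynomial ℝ, p.natDegree ≤ N →
      p.eval 1 = ∑ k ∈ Finset.range (N + 1), w k * p.eval (v k) := by
  let v : ℕ → ℝ := fun k => δ / (k + 2)
  have hv : Function.Injective v := by
    intro a b hab
    have ha : (0 : ℝ) < a + 2 := by positivity
    have hb : (0 : ℝ) < b + 2 := by positivity
    simp only [v] at hab
    rw [div_eq_div_iff ha.ne' hb.ne'] at hab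
    have := mul_left_cancel₀ hδ.ne' hab
    exact_mod_cast (by linarith : (a : ℝ) = b)
  refine ⟨v, fun k => (Lagrange.basis (Finset.range (N + 1)) v k).eval 1, fun k => ⟨?_, ?_⟩, ?_⟩
  · positivity
  · exact div_lt_self hδ (by linarith [(Nat.cast_nonneg k : (0 : ℝ) ≤ k)])
  · intro p hp
    have hdeg : p.degree < (Finset.range (N + 1)).card := by
      rw [Finset.card_range]
      exact (Polynomial.degree_le_of_natDegree_le hp).trans_lt (by exact_mod_cast Nat.lt_succ_self N)
    conv_lhs => rw [Lagrange.eq_interpolate (v := v) hv.injOn hdeg]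
    rw [Lagrange.interpolate_apply, Polynomial.eval_finsetSum]
    exact Finset.sum_congr rfl fun k _ => by simp [mul_comm]

/-- `t ↦ det (1 + t A)` is a polynomial function of degree at most the dimension. -/
lemma exists_polynomial_det_one_add_smul {E : Type*} [NormedAddCommGroup E] [NormedSpace ℝ E]
    [FiniteDimensional ℝ E] (A : E →L[ℝ] E) :
    ∃ p : Polynomial ℝ, p.natDegree ≤ finrank ℝ E ∧
      ∀ t : ℝ, p.eval t = (1 + t • A : E →L[ℝ] E).det := by
  let b := finBasis ℝ E
  let M := LinearMap.toMatrix b b (A : E →ₗ[ℝ] E)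
  refine ⟨((Polynomial.X : Polynomial ℝ) • M.map Polynomial.C
    + (1 : Matrix _ _ ℝ).map Polynomial.C).det, ?_, fun t => ?_⟩
  · simpa using Polynomial.natDegree_det_X_add_C_le M 1
  · rw [← Polynomial.coe_evalRingHom, RingHom.map_det, ContinuousLinearMap.det,
      ← LinearMap.det_toMatrix b]
    congr 1
    ext i j
    simp [M, Matrix.one_apply, LinearMap.toMatrix_apply, Basis.repr_self, Finsupp.single_apply,
      add_comm, eq_comm, apply_ite]
    exact mul_comm _ _

/-- Extending a Lipschitz map on a closed ball that vanishes on the sphere by zero keeps it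
Lipschitz. -/
lemma lipschitzWith_indicator_ball {E F : Type*} [NormedAddCommGroup E] [NormedSpace ℝ E]
    [NormedAddCommGroup F] {g : E → F} {K : ℝ≥0}
    (hg : LipschitzOnWith K g (closedBall 0 1)) (h0 : ∀ x, ‖x‖ = 1 → g x = 0) :
    LipschitzWith K ((ball (0 : E) 1).indicator g) := by
  have key : ∀ x y : E, x ∈ ball (0 : E) 1 → y ∉ ball (0 : E) 1 → dist (g x) 0 ≤ K * dist x y := by
    intro x y hx hy
    rw [mem_ball_zero_iff] at hx hy
    have hc : ContinuousOn (fun t : ℝ => ‖AffineMap.lineMap x y t‖) (Icc 0 1) := by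
      have : Continuous (AffineMap.lineMap x y : ℝ → E) := AffineMap.lineMap_continuous
      fun_prop
    obtain ⟨t, ht, htn⟩ := intermediate_value_Icc zero_le_one hc
      (show (1 : ℝ) ∈ Icc _ _ by simpa using ⟨hx.le, not_lt.1 hy⟩)
    simp only at htn
    have hz := h0 _ htn
    calc dist (g x) 0 = dist (g x) (g (AffineMap.lineMap x y t)) := by rw [hz]
      _ ≤ K * dist x (AffineMap.lineMap x y t) :=
        hg.dist_le_mul _ (by simpa using hx.le) _ (by simpa using htn.le)
      _ ≤ K * dist x y := by
        gcongr
        rw [dist_left_lineMap, Real.norm_eq_abs, abs_of_nonneg ht.1]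
        exact mul_le_of_le_one_left dist_nonneg ht.2
  refine LipschitzWith.of_dist_le_mul fun x y => ?_
  by_cases hx : x ∈ ball (0 : E) 1 <;> by_cases hy : y ∈ ball (0 : E) 1
  · rw [indicator_of_mem hx, indicator_of_mem hy]
    exact hg.dist_le_mul _ (ball_subset_closedBall hx) _ (ball_subset_closedBall hy)
  · rw [indicator_of_mem hx, indicator_of_notMem hy]
    exact key x y hx hy
  · rw [indicator_of_notMem hx, indicator_of_mem hy, dist_comm, dist_comm x]
    exact key y x hy hx
  · rw [indicator_of_notMem hx, indicator_of_notMem hy, dist_self]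
    positivity

/-- A small Lipschitz perturbation of the identity, supported in a set, permutes that set. -/
lemma image_id_add_eq {E : Type*} [NormedAddCommGroup E] [NormedSpace ℝ E]
    [CompleteSpace E] {g : E → E} {c : ℝ≥0} (hc : c < 1) (hg : LipschitzWith c g) {s : Set E}
    (hs : ∀ x ∉ s, g x = 0) :
    Function.Injective (fun x => x + g x) ∧ (fun x => x + g x) '' s = s := by
  have ha : ApproximatesLinearOn (fun x => x + g x)
      ((ContinuousLinearEquiv.refl ℝ E : E ≃L[ℝ] E) : E →L[ℝ] E) univ c := by
    rw [ApproximatesLinearOn.approximatesLinearOn_iff_lipschitzOnWith, lipschitzOnWith_univ]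
    convert hg using 1
    ext x; simp
  have hN : Subsingleton E ∨
      c < ‖((ContinuousLinearEquiv.refl ℝ E).symm : E →L[ℝ] E)‖₊⁻¹ := by
    rcases subsingleton_or_nontrivial E with h | h
    · exact Or.inl h
    · right
      have : ((ContinuousLinearEquiv.refl ℝ E).symm : E →L[ℝ] E) = ContinuousLinearMap.id ℝ E := rfl
      rw [this]
      simpa using hc
  have hinj : Function.Injective (fun x => x + g x) := injOn_univ.1 (ha.injOn hN)
  have hsurj := ha.surjective hN
  refine ⟨hinj, Subset.antisymm ?_ ?_⟩
  · rintro _ ⟨x, hx, rfl⟩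
    by_contra hn
    have h1 : (fun x => x + g x) (x + g x) = x + g x := by simp [hs _ hn]
    have h2 := hinj h1
    exact hn (by simpa [h2] using hx)
  · intro y hy
    obtain ⟨x, rfl⟩ := hsurj y
    refine ⟨x, ?_, rfl⟩
    by_contra hn
    exact hn (by simpa [hs _ hn] using hy)

lemma det_one_add_smul_pos {E : Type*} [NormedAddCommGroup E] [NormedSpace ℝ E]
    [FiniteDimensional ℝ E] {A : E →L[ℝ] E} {t : ℝ} (ht : 0 ≤ t) (h : t * ‖A‖ < 1) :
    0 < (1 + t • A : E →L[ℝ] E).det := by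
  obtain ⟨p, -, hp⟩ := exists_polynomial_det_one_add_smul A
  have hne : ∀ s ∈ Icc 0 t, p.eval s ≠ 0 := by
    intro s hs h0
    rw [hp] at h0
    have hu : IsUnit (1 + s • A : E →L[ℝ] E) := by
      have : ‖-(s • A)‖ < 1 := by
        rw [norm_neg, norm_smul, Real.norm_eq_abs, abs_of_nonneg hs.1]
        exact (mul_le_mul_of_nonneg_right hs.2 (norm_nonneg _)).trans_lt h
      simpa using isUnit_one_sub_of_norm_lt_one this
    exact ((hu.map ContinuousLinearMap.toLinearMapRingHom).map LinearMap.det).ne_zero h0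
  rw [← hp]
  by_contra hneg
  have h1 : p.eval 0 = 1 := by rw [hp]; simp [ContinuousLinearMap.det]
  obtain ⟨s, hs, hs0⟩ := intermediate_value_Icc' ht (p.continuous.continuousOn)
    (show (0 : ℝ) ∈ Icc _ _ from ⟨not_lt.1 hneg, by rw [h1]; exact zero_le_one⟩)
  exact hne s hs hs0

/-- A map with values in the unit sphere has singular derivative. -/
lemma det_fderiv_eq_zero_of_norm_eq_one {E : Type*} [NormedAddCommGroup E] [InnerProductSpace ℝ E]
    [FiniteDimensional ℝ E] {f : E → E} (hn : ∀ x, ‖f x‖ = 1) {x : E}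
    (hf : DifferentiableAt ℝ f x) : (fderiv ℝ f x).det = 0 := by
  by_contra hdet
  have hsurj : Function.Surjective (fderiv ℝ f x : E →ₗ[ℝ] E) :=
    ((LinearMap.isUnit_iff_isUnit_det _).2 (isUnit_iff_ne_zero.2 hdet) |>
      (Module.End.isUnit_iff _).1).2
  obtain ⟨v, hv⟩ := hsurj (f x)
  have h1 : HasFDerivAt (fun y => inner ℝ (f y) (f y)) _ x := hf.hasFDerivAt.inner ℝ hf.hasFDerivAt
  have h2 : (fun y => inner ℝ (f y) (f y)) = fun _ => (1 : ℝ) := by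
    ext y; simp [hn]
  rw [h2] at h1
  have h3 := congrArg (fun L => L v) (h1.unique (hasFDerivAt_const 1 x))
  have hv' : fderiv ℝ f x v = f x := hv
  simp [hv', hn] at h3

/-- There is no `C¹` retraction of a Euclidean space onto its unit sphere. -/
theorem not_exists_contDiff_retraction {E : Type*} [NormedAddCommGroup E] [InnerProductSpace ℝ E]
    [FiniteDimensional ℝ E] {f : E → E} (hf : ContDiff ℝ 1 f) (hn : ∀ x, ‖f x‖ = 1)
    (hid : ∀ x, ‖x‖ = 1 → f x = x) : False := by
  let _ : MeasurableSpace E := borel E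
  have : BorelSpace E := ⟨rfl⟩
  let μ : Measure E := Measure.addHaar
  let A : E → E →L[ℝ] E := fun x => fderiv ℝ f x - 1
  have hA : Continuous A := (hf.continuous_fderiv one_ne_zero).sub continuous_const
  have hder : ∀ x, HasFDerivAt (fun y => f y - y) (A x) x := fun x =>
    ((hf.differentiable one_ne_zero x).hasFDerivAt).sub (hasFDerivAt_id x)
  obtain ⟨K, hK⟩ := (isCompact_closedBall (0 : E) 1).exists_bound_of_continuousOn hA.continuousOn
  have hK0 : 0 ≤ K := (norm_nonneg _).trans (hK 0 (by simp))
  lift K to ℝ≥0 using hK0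
  have hlip : LipschitzOnWith K (fun y => f y - y) (closedBall 0 1) :=
    (convex_closedBall (0 : E) 1).lipschitzOnWith_of_nnnorm_hasFDerivWithin_le
      (fun x _ => (hder x).hasFDerivWithinAt) (fun x hx => hK x hx)
  have hlip' := lipschitzWith_indicator_ball hlip (fun x hx => by simp [hid x hx])
  have hintegrable : ∀ t : ℝ, IntegrableOn (fun x => (1 + t • A x : E →L[ℝ] E).det) (ball 0 1) μ := by
    intro t
    have : Continuous fun x => (1 + t • A x : E →L[ℝ] E).det :=
      ContinuousLinearMap.continuous_det.comp (by fun_prop)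
    exact (this.continuousOn.integrableOn_compact (isCompact_closedBall 0 1)).mono_set
      ball_subset_closedBall
  have hvol : ∀ t : ℝ, 0 ≤ t → t < 1 / (K + 1) →
      ∫ x in ball 0 1, (1 + t • A x : E →L[ℝ] E).det ∂μ = μ.real (ball 0 1) := by
    intro t ht0 ht
    have htK : t * K < 1 := by
      rw [lt_div_iff₀ (by positivity)] at ht
      nlinarith
    lift t to ℝ≥0 using ht0
    obtain ⟨hinj, himg⟩ := image_id_add_eq (s := ball (0 : E) 1) (c := t * K)
      (g := fun x => t • (ball (0 : E) 1).indicator (fun y => f y - y) x)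
      (by exact_mod_cast htK)
      (by simpa using! (lipschitzWith_smul (t : ℝ)).comp hlip')
      (fun x hx => by simp [indicator_of_notMem hx])
    have heq : EqOn (fun x => x + t • (ball (0 : E) 1).indicator (fun y => f y - y) x)
        (fun x => x + t • (f x - x)) (ball 0 1) := fun x hx => by simp [indicator_of_mem hx]
    have hinj' := hinj.injOn.congr heq
    rw [heq.image_eq] at himg
    have hcv := integral_image_eq_integral_abs_det_fderiv_smul μ (s := ball (0 : E) 1)
      measurableSet_ball (f := fun x => x + t • (f x - x)) (f' := fun x => 1 + (t : ℝ) • A x)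
      (fun x _ => (((hasFDerivAt_id x).add ((hder x).const_smul (t : ℝ))).hasFDerivWithinAt))
      hinj' (fun _ => (1 : ℝ))
    rw [himg] at hcv
    simp only [smul_eq_mul, mul_one, setIntegral_const] at hcv
    rw [hcv]
    refine setIntegral_congr_fun measurableSet_ball fun x hx => ?_
    refine (abs_of_pos (det_one_add_smul_pos t.2 ?_)).symm
    exact (mul_le_mul_of_nonneg_left (hK x (ball_subset_closedBall hx)) t.2).trans_lt htK
  obtain ⟨v, w, hv, hw⟩ := exists_affine_comb_eval_one (finrank ℝ E)
    (show (0 : ℝ) < 1 / (K + 1) by positivity)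
  have hw1 : ∑ k ∈ Finset.range (finrank ℝ E + 1), w k = 1 := by
    simpa using (hw 1 (by simp)).symm
  have hpt : ∀ x, ∑ k ∈ Finset.range (finrank ℝ E + 1), w k * (1 + v k • A x : E →L[ℝ] E).det
      = 0 := by
    intro x
    obtain ⟨p, hpd, hp⟩ := exists_polynomial_det_one_add_smul (A x)
    have := hw p hpd
    simp only [hp] at this
    rw [← this]
    simpa [A] using det_fderiv_eq_zero_of_norm_eq_one hn (hf.differentiable one_ne_zero x)
  have hzero : μ.real (ball (0 : E) 1) = 0 := by
    calc μ.real (ball (0 : E) 1)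
        = ∑ k ∈ Finset.range (finrank ℝ E + 1), w k * μ.real (ball (0 : E) 1) := by
          rw [← Finset.sum_mul, hw1, one_mul]
      _ = ∑ k ∈ Finset.range (finrank ℝ E + 1),
            ∫ x in ball 0 1, w k * (1 + v k • A x : E →L[ℝ] E).det ∂μ :=
          Finset.sum_congr rfl fun k _ => by
            rw [integral_const_mul, hvol _ (hv k).1 (hv k).2]
      _ = ∫ x in ball 0 1, ∑ k ∈ Finset.range (finrank ℝ E + 1),
            w k * (1 + v k • A x : E →L[ℝ] E).det ∂μ :=
          (integral_finsetSum _ fun k _ => (hintegrable (v k)).const_mul (w k)).symm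
      _ = 0 := by simp [hpt]
  exact (ENNReal.toReal_pos (measure_ball_pos μ (0 : E) one_pos).ne'
    measure_ball_lt_top.ne).ne' hzero

/-- A continuous self-map of a Euclidean space which is the identity far away from the origin
attains the value `0`. -/
theorem exists_eq_zero_of_eq_id_of_le_norm {E : Type*} [NormedAddCommGroup E]
    [InnerProductSpace ℝ E] [FiniteDimensional ℝ E] {G : E → E} (hG : Continuous G) {R : ℝ}
    (hR : 0 ≤ R) (hid : ∀ x, R ≤ ‖x‖ → G x = x) : ∃ x, G x = 0 := by
  by_contra! hne
  obtain ⟨g, hg, hdist, heq, -⟩ := hG.exists_contDiff_approx_and_eqOn (ε := fun x => ‖G x‖) 1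
    hG.norm (fun x => norm_pos_iff.2 (hne x)) (S := {x | R + 1 ≤ ‖x‖}) (U := {x | R < ‖x‖})
    (isClosed_le continuous_const continuous_norm)
    ((isOpen_lt continuous_const continuous_norm).mem_nhdsSet.2 fun x (hx : R + 1 ≤ ‖x‖) =>
      show R < ‖x‖ by linarith)
    (contDiffOn_id.congr fun x (hx : R < ‖x‖) => hid x hx.le)
  have hg0 : ∀ x, g x ≠ 0 := by
    intro x hx
    have := hdist x
    simp [hx] at this
  have hg' : ContDiff ℝ 1 fun x => g ((R + 1) • x) :=
    hg.comp (contDiff_const_smul (R + 1))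
  refine not_exists_contDiff_retraction (f := fun x => ‖g ((R + 1) • x)‖⁻¹ • g ((R + 1) • x))
    (((hg'.norm ℝ fun x => hg0 _).inv fun x => norm_ne_zero_iff.2 (hg0 _)).smul hg') ?_ ?_
  · intro x
    rw [norm_smul, norm_inv, norm_norm, inv_mul_cancel₀ (norm_ne_zero_iff.2 (hg0 _))]
  · intro x hx
    have hpos : 0 < R + 1 := by linarith
    have hnorm : ‖(R + 1) • x‖ = R + 1 := by
      rw [norm_smul, hx, mul_one, Real.norm_eq_abs, abs_of_pos hpos]
    have h1 : g ((R + 1) • x) = (R + 1) • x :=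
      (heq hnorm.ge).trans (hid _ (by linarith))
    simp only [h1, hnorm]
    rw [smul_smul, inv_mul_cancel₀ hpos.ne', one_smul]

theorem surjective_of_eq_id_of_le_norm {E : Type*} [NormedAddCommGroup E]
    [InnerProductSpace ℝ E] [FiniteDimensional ℝ E] {G : E → E} (hG : Continuous G) {R : ℝ}
    (hR : 0 ≤ R) (hid : ∀ x, R ≤ ‖x‖ → G x = x) : Function.Surjective G := by
  intro q
  obtain ⟨x, hx⟩ := exists_eq_zero_of_eq_id_of_le_norm (G := fun x => G (x + q) - q)
    (R := R + ‖q‖) (by fun_prop) (by positivity) fun x hx => by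
      have : R ≤ ‖x + q‖ := by
        have := norm_sub_le (x + q) q
        rw [add_sub_cancel_right] at this
        linarith
      simp [hid _ this]
  exact ⟨x + q, sub_eq_zero.1 hx⟩

section NearPole

variable {E : Type*} [NormedAddCommGroup E]

/-- Points of a product of spheres whose coordinates indexed by `J` are strictly closer to `p`
than the others, and avoid `p'`, while the others avoid `p`. -/
def nearPoleSet {ι : Type*} (p p' : sphere (0 : E) 1) (J : Finset ι) :
    Set (ι → sphere (0 : E) 1) :=
  {x | (∀ i ∈ J, ∀ j ∉ J, dist (x i) p < dist (x j) p) ∧ (∀ i ∈ J, x i ≠ p') ∧ ∀ j ∉ J, x j ≠ p}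

lemma isOpen_nearPoleSet {ι : Type*} [Finite ι] (p p' : sphere (0 : E) 1) (J : Finset ι) :
    IsOpen (nearPoleSet p p' J) := by
  simp only [nearPoleSet, ofPred_and, ofPred_forall]
  refine IsOpen.inter ?_ (IsOpen.inter ?_ ?_)
  · exact isOpen_iInter_of_finite fun i => isOpen_iInter_of_finite fun _ =>
      isOpen_iInter_of_finite fun j => isOpen_iInter_of_finite fun _ =>
        isOpen_lt (by fun_prop) (by fun_prop)
  · exact isOpen_iInter_of_finite fun i => isOpen_iInter_of_finite fun _ =>
      isOpen_ne_fun (by fun_prop) continuous_const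
  · exact isOpen_iInter_of_finite fun i => isOpen_iInter_of_finite fun _ =>
      isOpen_ne_fun (by fun_prop) continuous_const

lemma nearPoleSet_inj {ι : Type*} {p p' : sphere (0 : E) 1} {J J' : Finset ι}
    {x : ι → sphere (0 : E) 1} (hcard : J.card = J'.card) (hx : x ∈ nearPoleSet p p' J)
    (hx' : x ∈ nearPoleSet p p' J') : J = J' := by
  by_contra hne
  obtain ⟨i, hi, hi'⟩ : ∃ i ∈ J, i ∉ J' := by
    by_contra! h
    exact hne (Finset.eq_of_subset_of_card_le h hcard.ge)
  obtain ⟨j, hj', hj⟩ : ∃ j ∈ J', j ∉ J := by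
    by_contra! h
    exact hne (Finset.eq_of_subset_of_card_le h hcard.le).symm
  exact (hx.1 i hi j hj).asymm (hx'.1 j hj' i hi')

/-- Points of a product of spheres lying in some `nearPoleSet` of a `k`-element index set. -/
def nearPoleLayer (ι : Type*) (p p' : sphere (0 : E) 1) (k : ℕ) : Set (ι → sphere (0 : E) 1) :=
  ⋃ (J : Finset ι) (_ : J.card = k), nearPoleSet p p' J

lemma isOpen_nearPoleLayer (ι : Type*) [Finite ι] (p p' : sphere (0 : E) 1) (k : ℕ) :
    IsOpen (nearPoleLayer ι p p' k) :=
  isOpen_iUnion fun J => isOpen_iUnion fun _ => isOpen_nearPoleSet p p' J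

lemma exists_mem_nearPoleLayer {ι : Type*} [Fintype ι] {p p' : sphere (0 : E) 1} (hp : p ≠ p')
    (x : ι → sphere (0 : E) 1) : ∃ k < Fintype.card ι + 1, x ∈ nearPoleLayer ι p p' k := by
  classical
  let J : Finset ι := Finset.univ.filter fun i => x i = p
  refine ⟨J.card, Nat.lt_succ_of_le (Finset.card_le_univ J), mem_iUnion₂.2 ⟨J, rfl, ?_, ?_, ?_⟩⟩
  · intro i hi j hj
    simp only [J, Finset.mem_filter, Finset.mem_univ, true_and] at hi hj
    simpa [hi] using hj
  · intro i hi
    simp only [J, Finset.mem_filter, Finset.mem_univ, true_and] at hi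
    rwa [hi]
  · intro j hj
    simpa [J] using hj

end NearPole

section SphereProduct

variable {E : Type*} [NormedAddCommGroup E] [InnerProductSpace ℝ E]

/-- Radial projection to the unit sphere, with an arbitrary value at the origin. -/
noncomputable def radialProj (q : sphere (0 : E) 1) (x : E) : sphere (0 : E) 1 :=
  open Classical in
  if h : x = 0 then q else ⟨‖x‖⁻¹ • x, by simp [norm_smul, norm_ne_zero_iff.2 h]⟩

lemma coe_radialProj (q : sphere (0 : E) 1) {x : E} (h : x ≠ 0) :
    (radialProj q x : E) = ‖x‖⁻¹ • x := by
  simp [radialProj, h]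

lemma norm_smul_radialProj (q : sphere (0 : E) 1) (x : E) :
    ‖x‖ • (radialProj q x : E) = x := by
  by_cases h : x = 0
  · simp [h]
  · rw [coe_radialProj q h, smul_inv_smul₀ (norm_ne_zero_iff.2 h)]

lemma continuousAt_radialProj (q : sphere (0 : E) 1) {x : E} (h : x ≠ 0) :
    ContinuousAt (radialProj q) x := by
  rw [Topology.IsInducing.subtypeVal.continuousAt_iff]
  have : ContinuousAt (fun y : E => ‖y‖⁻¹ • y) x :=
    (continuousAt_id.norm.inv₀ (norm_ne_zero_iff.2 h)).smul continuousAt_id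
  refine this.congr ?_
  filter_upwards [isOpen_ne.mem_nhds h] with y hy
  exact (coe_radialProj q hy).symm

/-- A self-map of a finite product of spheres homotopic to the identity is surjective. -/
theorem surjective_of_homotopy_id_pi_sphere [FiniteDimensional ℝ E] {ι : Type*} [Fintype ι]
    {F : (ι → sphere (0 : E) 1) × unitInterval → ι → sphere (0 : E) 1} (hF : Continuous F)
    (h0 : ∀ u, F (u, 0) = u) (q : ι → sphere (0 : E) 1) : ∃ u, F (u, 1) = q := by
  classical
  let ρ : PiLp 2 (fun _ : ι => E) → ℝ := fun x => ∏ i, max 0 (1 - 2 * |‖x i‖ - 1|)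
  have hρ : Continuous ρ := by fun_prop
  have hρ0 : ∀ (x : PiLp 2 (fun _ : ι => E)) (i : ι), 1 / 2 ≤ |‖x i‖ - 1| → ρ x = 0 := fun x i hi =>
    Finset.prod_eq_zero (Finset.mem_univ i) (max_eq_left (by linarith))
  let u : PiLp 2 (fun _ : ι => E) → ι → sphere (0 : E) 1 := fun x i => radialProj (q i) (x i)
  let G : PiLp 2 (fun _ : ι => E) → PiLp 2 (fun _ : ι => E) := fun x => WithLp.toLp 2 fun i =>
    ‖x i‖ • (F (u x, projIcc 0 1 zero_le_one (ρ x)) i : E)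
  have hGid : ∀ x, ρ x = 0 → G x = x := by
    intro x hx
    ext i
    have : projIcc (0 : ℝ) 1 zero_le_one 0 = 0 := projIcc_left _
    simp only [G, hx, this, h0, u]
    exact norm_smul_radialProj _ _
  have hGcont : Continuous G := by
    rw [continuous_iff_continuousAt]
    intro x
    by_cases hx : ∃ i, x i = 0
    · obtain ⟨i, hi⟩ := hx
      refine continuousAt_id.congr ?_
      have ho : IsOpen {y : PiLp 2 (fun _ : ι => E) | ‖y i‖ < 1 / 2} :=
        isOpen_lt (by fun_prop) continuous_const
      filter_upwards [ho.mem_nhds (show ‖x i‖ < 1 / 2 by simp [hi])] with y hy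
      refine (hGid y (hρ0 y i ?_)).symm
      have hy' : ‖y i‖ < 1 / 2 := hy
      rw [abs_of_neg (by linarith)]
      linarith
    · push Not at hx
      have hu : ContinuousAt u x := continuousAt_pi.2 fun i =>
        ContinuousAt.comp (f := fun y : PiLp 2 (fun _ : ι => E) => y i) (continuousAt_radialProj (q i) (hx i))
          (by fun_prop)
      have hFu : ContinuousAt (fun y => F (u y, projIcc 0 1 zero_le_one (ρ y))) x :=
        hF.continuousAt.comp (hu.prodMk (continuous_projIcc.comp hρ).continuousAt)
      refine (PiLp.continuous_toLp 2 _).continuousAt.comp (continuousAt_pi.2 fun i => ?_)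
      exact ContinuousAt.smul (by fun_prop)
        (continuous_subtype_val.continuousAt.comp (continuousAt_pi.1 hFu i))
  have hGfar : ∀ x, 2 * (Fintype.card ι : ℝ) + 1 ≤ ‖x‖ → G x = x := by
    intro x hx
    refine hGid x ?_
    by_contra hne
    have hb : ∀ i, ‖x i‖ ≤ 2 := by
      intro i
      have := mt (hρ0 x i) hne
      have := le_abs_self (‖x i‖ - 1)
      linarith
    have h1 : ‖x‖ ^ 2 ≤ ∑ _i : ι, (4 : ℝ) := by
      rw [PiLp.norm_sq_eq_of_L2]
      refine Finset.sum_le_sum fun i _ => ?_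
      nlinarith [hb i, norm_nonneg (x i)]
    simp only [Finset.sum_const, Finset.card_univ, nsmul_eq_mul] at h1
    nlinarith [(Nat.cast_nonneg (Fintype.card ι) : (0 : ℝ) ≤ Fintype.card ι)]
  obtain ⟨x, hx⟩ := surjective_of_eq_id_of_le_norm hGcont (by positivity) hGfar
    (WithLp.toLp 2 fun i => (q i : E))
  have hcoord : ∀ i, ‖x i‖ • (F (u x, projIcc 0 1 zero_le_one (ρ x)) i : E) = q i := fun i =>
    congrArg (fun y : PiLp 2 (fun _ : ι => E) => y i) hx
  have hnorm : ∀ i, ‖x i‖ = 1 := fun i => by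
    simpa [norm_smul] using congrArg norm (hcoord i)
  have hρ1 : ρ x = 1 := by simp [ρ, hnorm]
  refine ⟨u x, funext fun i => Subtype.ext ?_⟩
  have hi := hcoord i
  rw [hρ1, hnorm, one_smul] at hi
  rw [← hi]
  congr
  exact (projIcc_right _).symm

/-- The complement of a point `v` of the sphere contracts, within the sphere, to any `c ≠ v`. -/
lemma exists_contraction_sphere_compl_singleton {v c : sphere (0 : E) 1} (hc : c ≠ v) :
    ∃ K : unitInterval × sphere (0 : E) 1 → sphere (0 : E) 1,
      ContinuousOn K {z | z.2 ≠ v} ∧ ∀ x ≠ v, K (0, x) = x ∧ K (1, x) = c := by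
  let e := stereographic (norm_eq_of_mem_sphere v)
  have hs : ∀ x ≠ v, x ∈ e.source := fun x hx => by
    simpa [e] using hx
  have ht : e.target = univ := by simp [e]
  refine ⟨fun z => e.symm ((1 - (z.1 : ℝ)) • e z.2 + (z.1 : ℝ) • e c), ?_, fun x hx => ?_⟩
  · have he : ContinuousOn (fun z : unitInterval × sphere (0 : E) 1 => e z.2) {z | z.2 ≠ v} :=
      e.continuousOn.comp continuous_snd.continuousOn fun z hz => hs _ hz
    have hsymm : Continuous e.symm := by
      rw [← continuousOn_univ, ← ht]
      exact e.continuousOn_symm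
    refine hsymm.comp_continuousOn (ContinuousOn.add (ContinuousOn.fun_smul ?_ he) ?_)
    · exact Continuous.continuousOn (by fun_prop)
    · exact Continuous.continuousOn (by fun_prop)
  · simp [e.left_inv (hs x hx), e.left_inv (hs c hc)]

/-- A map to the sphere which avoids one pole on a clopen set and the other pole on the complement
is homotopic to any constant away from the poles. -/
lemma homotopic_const_of_isClopen {Y : Type*} [TopologicalSpace Y] {p p' c : sphere (0 : E) 1}
    (hc : c ≠ p) (hc' : c ≠ p') (f : C(Y, sphere (0 : E) 1)) {P : Set Y} (hP : IsClopen P)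
    (h1 : ∀ y ∈ P, f y ≠ p') (h2 : ∀ y ∉ P, f y ≠ p) :
    ContinuousMap.Homotopic f (ContinuousMap.const Y c) := by
  classical
  obtain ⟨K, hK, hKe⟩ := exists_contraction_sphere_compl_singleton hc'
  obtain ⟨L, hL, hLe⟩ := exists_contraction_sphere_compl_singleton hc
  have ho : ∀ w : sphere (0 : E) 1, IsOpen {z : unitInterval × sphere (0 : E) 1 | z.2 ≠ w} :=
    fun w => isOpen_ne_fun continuous_snd continuous_const
  have hcomp : Continuous fun z : unitInterval × Y => (z.1, f z.2) := by fun_prop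
  refine ⟨⟨⟨fun z => if z.2 ∈ P then K (z.1, f z.2) else L (z.1, f z.2), ?_⟩, fun y => ?_,
    fun y => ?_⟩⟩
  · rw [continuous_iff_continuousAt]
    rintro ⟨t, y⟩
    by_cases hy : y ∈ P
    · refine (ContinuousAt.comp (x := (t, y)) (f := fun z : unitInterval × Y => (z.1, f z.2))
        (hK.continuousAt ((ho p').mem_nhds (h1 y hy))) hcomp.continuousAt).congr ?_
      filter_upwards [(hP.isOpen.preimage continuous_snd).mem_nhds hy] with z hz
      exact (if_pos hz).symm
    · refine (ContinuousAt.comp (x := (t, y)) (f := fun z : unitInterval × Y => (z.1, f z.2))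
        (hL.continuousAt ((ho p).mem_nhds (h2 y hy))) hcomp.continuousAt).congr ?_
      filter_upwards [(hP.compl.isOpen.preimage continuous_snd).mem_nhds hy] with z hz
      exact (if_neg hz).symm
  · by_cases hy : y ∈ P
    · simp [hy, hKe _ (h1 y hy)]
    · simp [hy, hLe _ (h2 y hy)]
  · by_cases hy : y ∈ P
    · simp [hy, hKe _ (h1 y hy)]
    · simp [hy, hLe _ (h2 y hy)]

lemma homotopic_const_nearPoleLayer {ι : Type*} [Finite ι] {p p' c : sphere (0 : E) 1}
    (hc : c ≠ p) (hc' : c ≠ p') (k : ℕ) :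
    ContinuousMap.Homotopic
      (⟨Subtype.val, continuous_subtype_val⟩ : C(nearPoleLayer ι p p' k, ι → sphere (0 : E) 1))
      (ContinuousMap.const _ fun _ => c) := by
  have hcoord : ∀ i : ι, ContinuousMap.Homotopic
      (⟨fun x => x.1 i, (continuous_apply i).comp continuous_subtype_val⟩ : C(nearPoleLayer ι p p' k, sphere (0 : E) 1))
      (ContinuousMap.const _ c) := by
    intro i
    let P : Set (nearPoleLayer ι p p' k) :=
      ⋃ (J : Finset ι) (_ : J.card = k ∧ i ∈ J), Subtype.val ⁻¹' nearPoleSet p p' J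
    have hPc : Pᶜ =
        ⋃ (J : Finset ι) (_ : J.card = k ∧ i ∉ J), Subtype.val ⁻¹' nearPoleSet p p' J := by
      ext ⟨x, hx⟩
      obtain ⟨J, hJ, hxJ⟩ := mem_iUnion₂.1 hx
      simp only [P, mem_compl_iff, mem_iUnion, mem_preimage, exists_prop]
      constructor
      · intro h
        exact ⟨J, ⟨hJ, fun hi => h ⟨J, ⟨hJ, hi⟩, hxJ⟩⟩, hxJ⟩
      · rintro ⟨J₁, ⟨hJ₁, hi₁⟩, hx₁⟩ ⟨J₂, ⟨hJ₂, hi₂⟩, hx₂⟩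
        exact hi₁ (nearPoleSet_inj (hJ₁.trans hJ₂.symm) hx₁ hx₂ ▸ hi₂)
    have hopen : ∀ J : Finset ι, IsOpen
        (Subtype.val ⁻¹' nearPoleSet p p' J : Set (nearPoleLayer ι p p' k)) := fun J =>
      (isOpen_nearPoleSet p p' J).preimage continuous_subtype_val
    have hP : IsClopen P := by
      refine ⟨⟨?_⟩, isOpen_iUnion fun J => isOpen_iUnion fun _ => hopen J⟩
      rw [hPc]
      exact isOpen_iUnion fun J => isOpen_iUnion fun _ => hopen J
    refine homotopic_const_of_isClopen hc hc' _ hP ?_ ?_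
    · intro y hy
      obtain ⟨J, hJ, hyJ⟩ := mem_iUnion₂.1 hy
      exact hyJ.2.1 i hJ.2
    · intro y hy
      rw [← mem_compl_iff, hPc] at hy
      obtain ⟨J, hJ, hyJ⟩ := mem_iUnion₂.1 hy
      exact hyJ.2.2 i hJ.2
  exact ⟨ContinuousMap.Homotopy.pi fun i => (hcoord i).some⟩

end SphereProduct

/-- If an open set is contractible in a normal space, then the identity can be deformed so as to
become constant on any given closed subset of it. -/
lemma exists_deformation_const_on {X : Type*} [TopologicalSpace X] [NormalSpace X] {U A : Set X}
    (hU : IsOpen U) (hA : IsClosed A) (hAU : A ⊆ U) {x : X}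
    (h : ContinuousMap.Homotopic (⟨Subtype.val, continuous_subtype_val⟩ : C(U, X))
      (ContinuousMap.const U x)) :
    ∃ F : X × unitInterval → X, Continuous F ∧ (∀ u, F (u, 0) = u) ∧ ∀ u ∈ A, F (u, 1) = x := by
  classical
  obtain ⟨H⟩ := h
  obtain ⟨V, hV, hAV, hVU⟩ := normal_exists_closure_subset hA hU hAU
  obtain ⟨l, hl0, hl1, hl⟩ := exists_continuous_zero_one_of_isClosed hV.isClosed_compl hA
    (disjoint_compl_left_iff_subset.2 hAV)
  let r : X → unitInterval := fun u => ⟨l u, hl u⟩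
  have hr : Continuous r := l.continuous.subtype_mk _
  let F : X × unitInterval → X := fun z =>
    if hz : z.1 ∈ U then H (z.2 * r z.1, ⟨z.1, hz⟩) else z.1
  have hF : ∀ (u : X) (s : unitInterval), s * r u = 0 → F (u, s) = u := by
    intro u s hs
    by_cases hu : u ∈ U
    · simp only [F, hu, hs, dite_true]
      exact H.apply_zero _
    · simp [F, hu]
  refine ⟨F, ?_, fun u => hF u 0 (zero_mul _), fun u hu => ?_⟩
  · rw [continuous_iff_continuousAt]
    rintro ⟨u, s⟩
    by_cases hu : u ∈ U
    · have hopen : IsOpen {z : X × unitInterval | z.1 ∈ U} := hU.preimage continuous_fst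
      refine ContinuousOn.continuousAt ?_ (hopen.mem_nhds hu)
      rw [continuousOn_iff_continuous_domRestrict]
      have : Continuous fun z : {z : X × unitInterval | z.1 ∈ U} =>
          H (z.1.2 * r z.1.1, ⟨z.1.1, z.2⟩) := by fun_prop
      refine this.congr fun z => ?_
      have hz : z.1.1 ∈ U := z.2
      simp [F, hz]
    · have hopen : IsOpen {z : X × unitInterval | z.1 ∉ closure V} :=
        isClosed_closure.isOpen_compl.preimage continuous_fst
      refine continuous_fst.continuousAt.congr ?_
      filter_upwards [hopen.mem_nhds (fun h => hu (hVU h))] with z hz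
      have : r z.1 = 0 := Subtype.ext (hl0 fun h => hz (subset_closure h))
      exact (hF z.1 z.2 (by rw [this, mul_zero])).symm
  · have hr1 : r u = 1 := Subtype.ext (hl1 hu)
    simp only [F, hAU hu, hr1, dite_true, mul_one]
    exact H.apply_one _

/-- The product of `n` spheres is not covered by `m ≤ n` open sets contractible in it. -/
lemma card_lt_of_cover_pi_sphere {E : Type*} [NormedAddCommGroup E] [InnerProductSpace ℝ E]
    [FiniteDimensional ℝ E] [Nontrivial E] {n m : ℕ} {U : Fin m → Set (Fin n → sphere (0 : E) 1)}
    (hU : ∀ i, IsOpen (U i)) (hcov : ⋃ i, U i = univ)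
    (h : ∀ i, ∃ x, ContinuousMap.Homotopic
      (⟨Subtype.val, continuous_subtype_val⟩ : C(U i, Fin n → sphere (0 : E) 1))
      (ContinuousMap.const (U i) x)) : n < m := by
  by_contra! hmn
  obtain ⟨A, hAcov, hAc, hAU⟩ := exists_iUnion_eq_closed_subset hU (fun x => toFinite _) hcov
  choose x hx using h
  choose F hFc hF0 hF1 using fun i => exists_deformation_const_on (hU i) (hAc i) (hAU i) (hx i)
  obtain ⟨q₀⟩ : Nonempty (sphere (0 : E) 1) :=
    (NormedSpace.sphere_nonempty.2 zero_le_one).to_subtype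
  let D : (Fin n → sphere (0 : E) 1) × unitInterval → Fin n → sphere (0 : E) 1 := fun z j =>
    if hj : (j : ℕ) < m then F ⟨j, hj⟩ z j else z.1 j
  let q : Fin n → sphere (0 : E) 1 := fun j => if hj : (j : ℕ) < m then - x ⟨j, hj⟩ j else q₀
  have hD : Continuous D := by
    refine continuous_pi fun j => ?_
    by_cases hj : (j : ℕ) < m
    · simp only [D, hj, dite_true]
      exact (continuous_apply j).comp (hFc _)
    · simp only [D, hj, dite_false]
      exact (continuous_apply j).comp continuous_fst
  obtain ⟨u, hu⟩ := surjective_of_homotopy_id_pi_sphere hD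
    (fun u => funext fun j => by simp [D, hF0]) q
  obtain ⟨i, hi⟩ := mem_iUnion.1 (hAcov.symm ▸ mem_univ u)
  have hj := congrFun hu (Fin.castLE hmn i)
  simp only [D, q, Fin.val_castLE, i.2, dite_true, hF1 i u hi] at hj
  exact ne_neg_of_mem_unit_sphere ℝ _ hj

/-- The LS-category of a product of `n` copies of the sphere `S^d` (with the product
topology) is `n`, for `n ≥ 1` and `d ≥ 1`. -/
theorem LScat_pi_sphere (n d : ℕ) (hn : 1 ≤ n) (hd : 1 ≤ d) :
    LScat (Fin n → unitSphere d) = (n : ℕ∞) := by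
  refine le_antisymm (sInf_le ⟨n, rfl, ?_⟩) (le_sInf ?_)
  · let a : sphere (0 : EuclideanSpace ℝ (Fin (d + 1))) 1 :=
      ⟨EuclideanSpace.single 0 1, by simp⟩
    let b : sphere (0 : EuclideanSpace ℝ (Fin (d + 1))) 1 :=
      ⟨EuclideanSpace.single (Fin.last d) 1, by simp⟩
    have hlast : (0 : Fin (d + 1)) ≠ Fin.last d := fun h => by
      have := congrArg Fin.val h
      simp at this
      omega
    have hne : ∀ s : ℝ, (b : EuclideanSpace ℝ (Fin (d + 1))) ≠ s • a := fun s h => by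
      have := congrArg (fun y : EuclideanSpace ℝ (Fin (d + 1)) => y (Fin.last d)) h
      simp [a, b, hlast.symm] at this
    have hba : b ≠ a := fun h => hne 1 (by rw [h, one_smul])
    have hba' : b ≠ -a := fun h => hne (-1) (by rw [h]; simp)
    refine ⟨fun k => nearPoleLayer (Fin n) a (-a) k, fun k => isOpen_nearPoleLayer _ _ _ _, ?_,
      fun k => ⟨fun _ => b, homotopic_const_nearPoleLayer hba hba' k⟩⟩
    refine eq_univ_of_forall fun x => ?_
    obtain ⟨k, hk, hx⟩ := exists_mem_nearPoleLayer (ne_neg_of_mem_unit_sphere ℝ a) x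
    exact mem_iUnion.2 ⟨⟨k, by simpa using hk⟩, hx⟩
  · rintro _ ⟨m, rfl, U, hU, hcov, h⟩
    have : n < m + 1 := card_lt_of_cover_pi_sphere
      (E := EuclideanSpace ℝ (Fin (d + 1))) hU hcov h
    exact_mod_cast Nat.lt_succ_iff.1 this
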